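/- For every unconstrained coefficient vector β ∈ ℝ^D, the transformation H satisfies H(a) = a and H(b) = b. -/

import Mathlib

open MeasureTheory Finset

noncomputable section

/-- The cardinal cubic B-spline. -/
def cubicN (t : ℝ) : ℝ :=
  if 0 ≤ t ∧ t < 1 then t ^ 3 / 6
  else if 1 ≤ t ∧ t < 2 then (-3 * t ^ 3 + 12 * t ^ 2 - 12 * t + 4) / 6
  else if 2 ≤ t ∧ t < 3 then (3 * t ^ 3 - 24 * t ^ 2 + 60 * t - 44) / 6
  else if 3 ≤ t ∧ t ≤ 4 then (4 - t) ^ 3 / 6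
  else 0

/-- Equidistant knots `k_j = k0 + j·k`. -/
def knot (k0 k : ℝ) (j : ℤ) : ℝ := k0 + (j : ℝ) * k

/-- Cubic B-spline basis functions `B_j(x) = N((x − k_{j−3})/k)` for `j = 1, …, J`. -/
def Bspl (k0 k : ℝ) (j : ℕ) (x : ℝ) : ℝ := cubicN ((x - knot k0 k ((j : ℤ) - 3)) / k)

/-- The coefficients `γ_1, …, γ_J` (with `J = D + 7`, `m = D + 5`), defined from the
unconstrained vector `β ∈ ℝ^D`. -/
def gam (D : ℕ) (k0 k : ℝ) (β : Fin D → ℝ) (j : ℕ) : ℝ :=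
  if j = 1 then k0
  else if j = 2 ∨ j = 3 ∨ j = 4 ∨ j = D + 5 ∨ j = D + 6 ∨ j = D + 7 then Real.log k
  else if h : 5 ≤ j ∧ j ≤ D + 4 then
    β ⟨j - 5, by omega⟩ - Real.log ((∑ d, Real.exp (β d)) / ((D : ℝ) * k))
  else 0

/-- The transformation `H`: a cubic B-spline with coefficients
`γ_1 + ∑_{ℓ=2}^j exp(γ_ℓ)` on `[k_1, k_m]` (with `m = D + 5`), and the identity outside. -/
def Hfun (D : ℕ) (k0 k : ℝ) (β : Fin D → ℝ) (x : ℝ) : ℝ :=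
  if knot k0 k 1 ≤ x ∧ x ≤ knot k0 k ((D : ℤ) + 5) then
    ∑ j ∈ Finset.Icc 1 (D + 7),
      Bspl k0 k j x * (gam D k0 k β 1 + ∑ l ∈ Finset.Icc 2 j, Real.exp (gam D k0 k β l))
  else x

/-!
At the knot `k_i` only three basis functions are nonzero, with values `1/6, 4/6, 1/6`, so a spline
with coefficients `c` takes the value `(c_i + 4 c_{i+1} + c_{i+2}) / 6` there; if these three
coefficients are `k_{i-1}, k_i, k_{i+1}`, the value is `k_i`. The coefficients of `H` start at `k_0`
and grow by `exp γ_ℓ`. The outer increments equal `k`, and the `D` inner ones are a softmax rescaled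
to have sum `D * k`. Hence the `j`-th coefficient is `k_{j-1}` both before and after the inner
block, and `a` and `b` lie next to that block.
-/

lemma cubicN_intCast (n : ℤ) :
    cubicN n = if n = 1 then 1 / 6 else if n = 2 then 4 / 6 else if n = 3 then 1 / 6 else 0 := by
  by_cases hn : 0 ≤ n ∧ n ≤ 4
  · obtain ⟨hn₀, hn₄⟩ := hn
    interval_cases n <;> norm_num [cubicN]
  · have hn' : (n : ℝ) < 0 ∨ (4 : ℝ) < n := by norm_cast; omega
    have hzero : cubicN n = 0 := by
      unfold cubicN
      rw [if_neg, if_neg, if_neg, if_neg] <;> grind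
    rw [hzero]
    grind

section Knots

variable {k : ℝ} (k0 : ℝ)

lemma knot_sub_knot_div (hk : k ≠ 0) (i j : ℤ) :
    (knot k0 k i - knot k0 k j) / k = ((i - j : ℤ) : ℝ) := by
  unfold knot
  push_cast
  field_simp
  ring

lemma knot_le_knot (hk : 0 ≤ k) {i j : ℤ} (hij : i ≤ j) : knot k0 k i ≤ knot k0 k j := by
  unfold knot
  gcongr

lemma Bspl_knot (hk : k ≠ 0) (i j : ℕ) :
    Bspl k0 k j (knot k0 k i) =
      (if j = i then 1 / 6 else 0) + (if j = i + 1 then 4 / 6 else 0)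
        + (if j = i + 2 then 1 / 6 else 0) := by
  rw [Bspl, knot_sub_knot_div k0 hk, cubicN_intCast]
  split_ifs <;> first | omega | norm_num

lemma sum_Bspl_knot_mul (hk : k ≠ 0) {s : Finset ℕ} {i : ℕ} (hi : i ∈ s) (hi₁ : i + 1 ∈ s)
    (hi₂ : i + 2 ∈ s) (c : ℕ → ℝ) :
    ∑ j ∈ s, Bspl k0 k j (knot k0 k i) * c j = (c i + 4 * c (i + 1) + c (i + 2)) / 6 := by
  simp only [Bspl_knot k0 hk, add_mul, ite_mul, zero_mul, sum_add_distrib, sum_ite_eq', if_pos hi,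
    if_pos hi₁, if_pos hi₂]
  ring

end Knots

lemma sum_exp_sub_log_sum_exp_div {ι : Type*} [Fintype ι] [Nonempty ι] (β : ι → ℝ) {c : ℝ}
    (hc : 0 < c) :
    ∑ i, Real.exp (β i - Real.log ((∑ d, Real.exp (β d)) / c)) = c := by
  have hsum : 0 < ∑ d, Real.exp (β d) := sum_pos (fun _ _ ↦ Real.exp_pos _) univ_nonempty
  simp only [Real.exp_sub, Real.exp_log (div_pos hsum hc), ← sum_div]
  field_simp

section Coefficients

variable {D : ℕ} {k : ℝ} (k0 : ℝ) (β : Fin D → ℝ)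

lemma gam_one (k : ℝ) : gam D k0 k β 1 = k0 := if_pos rfl

lemma exp_gam_of_outer (hk : 0 < k) {j : ℕ} (hj : j ∈ Icc 2 4 ∪ Icc (D + 5) (D + 7)) :
    Real.exp (gam D k0 k β j) = k := by
  simp only [mem_union, mem_Icc] at hj
  rw [gam, if_neg (by omega), if_pos (by omega), Real.exp_log hk]

lemma gam_five_add (k : ℝ) (d : Fin D) :
    gam D k0 k β (5 + d) = β d - Real.log ((∑ i, Real.exp (β i)) / (D * k)) := by
  rw [gam, if_neg (by omega), if_neg (by omega), dif_pos (by omega)]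
  simp only [Nat.add_sub_cancel_left, Fin.eta]

lemma sum_exp_gam_inner (hk : 0 < k) :
    ∑ l ∈ range D, Real.exp (gam D k0 k β (5 + l)) = D * k := by
  rcases D.eq_zero_or_pos with rfl | hD
  · simp
  · have : Nonempty (Fin D) := Fin.pos_iff_nonempty.mp hD
    simp only [sum_range, gam_five_add]
    exact sum_exp_sub_log_sum_exp_div β (by positivity)

/-- The spline coefficient `γ_1 + ∑_{ℓ=2}^j exp γ_ℓ` multiplying `B_j` in `Hfun`; as there, indices
start at `j = 1`. -/
def splineCoeff (D : ℕ) (k0 k : ℝ) (β : Fin D → ℝ) (j : ℕ) : ℝ :=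
  gam D k0 k β 1 + ∑ l ∈ Icc 2 j, Real.exp (gam D k0 k β l)

lemma splineCoeff_one (k : ℝ) : splineCoeff D k0 k β 1 = k0 := by
  simp [splineCoeff, gam_one]

lemma splineCoeff_succ (k : ℝ) {j : ℕ} (hj : 1 ≤ j) :
    splineCoeff D k0 k β (j + 1) =
      splineCoeff D k0 k β j + Real.exp (gam D k0 k β (j + 1)) := by
  rw [splineCoeff, splineCoeff, sum_Icc_succ_top (by omega), add_assoc]

lemma splineCoeff_add (k : ℝ) {j : ℕ} (hj : 1 ≤ j) (n : ℕ) :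
    splineCoeff D k0 k β (j + n) =
      splineCoeff D k0 k β j + ∑ l ∈ range n, Real.exp (gam D k0 k β (j + 1 + l)) := by
  induction n with
  | zero => simp
  | succ n ih =>
    rw [← add_assoc, splineCoeff_succ k0 β k (by omega), ih, sum_range_succ, add_assoc,
      add_right_comm j n 1]

lemma splineCoeff_add_of_exp_gam_eq {j n : ℕ} (hj : 1 ≤ j)
    (hincr : ∀ l < n, Real.exp (gam D k0 k β (j + 1 + l)) = k) :
    splineCoeff D k0 k β (j + n) = splineCoeff D k0 k β j + n * k := by
  rw [splineCoeff_add k0 β k hj, sum_congr rfl fun l hl ↦ hincr l (mem_range.mp hl), sum_const,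
    card_range, nsmul_eq_mul]

lemma splineCoeff_eq_knot_of_le_four (hk : 0 < k) {j : ℕ} (hj₁ : 1 ≤ j) (hj₄ : j ≤ 4) :
    splineCoeff D k0 k β j = knot k0 k (j - 1) := by
  obtain ⟨n, rfl⟩ := Nat.exists_eq_add_of_le hj₁
  rw [splineCoeff_add_of_exp_gam_eq k0 β le_rfl fun l hl ↦ exp_gam_of_outer k0 β hk (by grind),
    splineCoeff_one, knot]
  push_cast
  ring

lemma splineCoeff_four_add (hk : 0 < k) :
    splineCoeff D k0 k β (4 + D) = splineCoeff D k0 k β 4 + D * k := by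
  rw [splineCoeff_add k0 β k (by norm_num), sum_exp_gam_inner k0 β hk]

lemma splineCoeff_eq_knot_of_four_add_le (hk : 0 < k) {j : ℕ} (hj₁ : 4 + D ≤ j)
    (hj₂ : j ≤ 7 + D) : splineCoeff D k0 k β j = knot k0 k (j - 1) := by
  obtain ⟨n, rfl⟩ := Nat.exists_eq_add_of_le hj₁
  rw [splineCoeff_add_of_exp_gam_eq k0 β (by omega)
      fun l hl ↦ exp_gam_of_outer k0 β hk (by grind),
    splineCoeff_four_add k0 β hk, splineCoeff_eq_knot_of_le_four k0 β hk (by norm_num) le_rfl]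
  simp only [knot]
  push_cast
  ring

lemma Hfun_knot (hk : 0 < k) {i : ℕ} (hi₁ : 1 ≤ i) (hi₂ : i ≤ D + 5) :
    Hfun D k0 k β (knot k0 k i) =
      (splineCoeff D k0 k β i + 4 * splineCoeff D k0 k β (i + 1)
        + splineCoeff D k0 k β (i + 2)) / 6 := by
  rw [Hfun, if_pos ⟨knot_le_knot k0 hk.le (by omega), knot_le_knot k0 hk.le (by omega)⟩]
  exact sum_Bspl_knot_mul k0 hk.ne' (by grind) (by grind) (by grind) (splineCoeff D k0 k β)

lemma Hfun_knot_eq_self (hk : 0 < k) {i : ℕ} (hi₁ : 1 ≤ i) (hi₂ : i ≤ D + 5)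
    (hcoeff : ∀ j ∈ Icc i (i + 2), splineCoeff D k0 k β j = knot k0 k (j - 1)) :
    Hfun D k0 k β (knot k0 k i) = knot k0 k i := by
  rw [Hfun_knot k0 β hk hi₁ hi₂, hcoeff i (by simp), hcoeff (i + 1) (by simp),
    hcoeff (i + 2) (by simp)]
  simp only [knot]
  push_cast
  ring

end Coefficients

/-- For every `β ∈ ℝ^D`, the transformation `H` satisfies `H(a) = a` and
`H(b) = b`, where `a = k_2` and `b = k_{m−1}` with `m = D + 5`. -/
theorem H_passes_through_a_and_b (D : ℕ) (hD : 1 ≤ D) (k0 k : ℝ) (hk : 0 < k)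
    (β : Fin D → ℝ) :
    Hfun D k0 k β (knot k0 k 2) = knot k0 k 2 ∧
    Hfun D k0 k β (knot k0 k ((D : ℤ) + 4)) = knot k0 k ((D : ℤ) + 4) := by
  constructor
  · refine Hfun_knot_eq_self k0 β hk (i := 2) (by omega) (by omega) fun j hj ↦ ?_
    exact splineCoeff_eq_knot_of_le_four k0 β hk (by grind) (by grind)
  · refine Hfun_knot_eq_self k0 β hk (i := D + 4) (by omega) (by omega) fun j hj ↦ ?_
    exact splineCoeff_eq_knot_of_four_add_le k0 β hk (by grind) (by grind)

end
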